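/- Let a, b, α, β be nonzero complex numbers and suppose the exponential polynomials f(z) = 1 − a·e^{αz} and g(z) = 1 − b·e^{βz} have infinitely many common zeros in ℂ. Then there exists a simple exponential polynomial h ∈ 𝓔, having infinitely many zeros in ℂ, which divides both f and g in the ring 𝓔. -/

import Mathlib

open Complex Set

noncomputable section

/-- `f` is an exponential polynomial, i.e. an element of the ring `𝓔`. -/
def IsExpPoly (f : ℂ → ℂ) : Prop :=
  ∃ (N : ℕ) (lam mu : Fin N → ℂ),
    ∀ z : ℂ, f z = ∑ i, lam i * Complex.exp (mu i * z)

/-- `h` divides `f` in the ring `𝓔`. -/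
def EDvd (h f : ℂ → ℂ) : Prop :=
  ∃ q : ℂ → ℂ, IsExpPoly q ∧ f = h * q

/-- `f` is a unit of the ring `𝓔`. -/
def EUnit (f : ℂ → ℂ) : Prop :=
  IsExpPoly f ∧ ∃ g : ℂ → ℂ, IsExpPoly g ∧ f * g = 1

/-- `f` is irreducible in the ring `𝓔`. -/
def EIrreducible (f : ℂ → ℂ) : Prop :=
  IsExpPoly f ∧ f ≠ 0 ∧ ¬ EUnit f ∧
    ∀ g h : ℂ → ℂ, IsExpPoly g → IsExpPoly h → f = g * h → EUnit g ∨ EUnit h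

/-- canonical representation: pairwise distinct exponents, nonzero coefficients. -/
def IsCanonicalRep (f : ℂ → ℂ) {N : ℕ} (lam mu : Fin N → ℂ) : Prop :=
  (∀ i, lam i ≠ 0) ∧ Function.Injective mu ∧
    ∀ z : ℂ, f z = ∑ i, lam i * Complex.exp (mu i * z)

/-- `f` is a simple exponential polynomial: its support has `ℚ`-dimension 1. -/
def IsSimple (f : ℂ → ℂ) : Prop :=
  ∃ (N : ℕ) (lam mu : Fin N → ℂ), IsCanonicalRep f lam mu ∧
    Module.finrank ℚ (Submodule.span ℚ (Set.range mu)) = 1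

/-- Transcendence degree over `ℚ` of (the field generated by) a set of complex numbers. -/
noncomputable def trdegQ (s : Set ℂ) : Cardinal.{0} :=
  ⨆ t : {t : Finset ℂ // ↑t ⊆ s ∧ AlgebraicIndependent ℚ (Subtype.val : {x : ℂ // x ∈ t} → ℂ)},
    (t.1.card : Cardinal)

/-- Schanuel's Conjecture. -/
def SchanuelConjecture : Prop :=
  ∀ (n : ℕ) (lam : Fin n → ℂ), LinearIndependent ℚ lam →
    (n : Cardinal) ≤ trdegQ (Set.range lam ∪ Set.range fun i => Complex.exp (lam i))

/-!
Let `z₀ ≠ z₁` be common zeros of the binomials `1 - a·e^{αz}`. A binomial vanishing at `z₀` equals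
`1 - e^{α(z - z₀)}`, and its vanishing at `z₁` forces `α = m·γ` with `m ∈ ℤ` and
`γ = 2πi / (z₁ - z₀)`. Writing `u = e^{γ(z - z₀)}`, a unit of `𝓔`, the binomials become the elements
`1 - u ^ m`, and all of these are divisible by `1 - u`.
-/

theorem isExpPoly_sum {ι : Type*} [Fintype ι] (lam mu : ι → ℂ) :
    IsExpPoly fun z => ∑ i, lam i * exp (mu i * z) := by
  let e := (Fintype.equivFin ι).symm
  exact ⟨Fintype.card ι, lam ∘ e, mu ∘ e, fun z =>
    (e.sum_comp fun i => lam i * exp (mu i * z)).symm⟩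

theorem isExpPoly_const_mul_exp (c μ : ℂ) : IsExpPoly fun z => c * exp (μ * z) :=
  ⟨1, fun _ => c, fun _ => μ, fun z => by simp⟩

namespace IsExpPoly

variable {f g : ℂ → ℂ}

theorem add (hf : IsExpPoly f) (hg : IsExpPoly g) : IsExpPoly (f + g) := by
  obtain ⟨M, lam, mu, hf⟩ := hf
  obtain ⟨N, lam', mu', hg⟩ := hg
  convert isExpPoly_sum (Sum.elim lam lam') (Sum.elim mu mu') using 2 with z
  simp [hf, hg]

theorem mul (hf : IsExpPoly f) (hg : IsExpPoly g) : IsExpPoly (f * g) := by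
  obtain ⟨M, lam, mu, hf⟩ := hf
  obtain ⟨N, lam', mu', hg⟩ := hg
  convert isExpPoly_sum (fun p : Fin M × Fin N => lam p.1 * lam' p.2)
    (fun p => mu p.1 + mu' p.2) using 2 with z
  simp only [Pi.mul_apply, hf, hg, Fintype.sum_mul_sum, Fintype.sum_prod_type, add_mul, exp_add,
    mul_mul_mul_comm]

end IsExpPoly

/-- The ring `𝓔` of exponential polynomials, as a `ℂ`-subalgebra of all functions `ℂ → ℂ`. It makes
the divisibility theory of commutative rings available for `EDvd`. -/
def expPolySubalgebra : Subalgebra ℂ (ℂ → ℂ) where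
  carrier := {f | IsExpPoly f}
  add_mem' := IsExpPoly.add
  mul_mem' := IsExpPoly.mul
  algebraMap_mem' c := by simpa using! isExpPoly_const_mul_exp c 0

theorem edvd_of_dvd {h f : expPolySubalgebra} (hdvd : h ∣ f) : EDvd h f := by
  obtain ⟨q, rfl⟩ := hdvd
  exact ⟨q, q.2, rfl⟩

/-- The exponential `z ↦ e^{μ(z - w)}` as an element of `𝓔`, multiplicative in the frequency `μ`;
being defined on a group, it takes values in the units of `𝓔`. -/
def shiftedExp (w : ℂ) : Multiplicative ℂ →* expPolySubalgebra where
  toFun μ := ⟨fun z => exp (μ.toAdd * (z - w)), by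
    convert! isExpPoly_const_mul_exp (exp (-(μ.toAdd * w))) μ.toAdd using 2 with z
    rw [← exp_add]
    ring_nf⟩
  map_one' := by ext; simp
  map_mul' μ ν := by ext; simp [add_mul, exp_add]

theorem one_sub_unit_dvd_one_sub_zpow {R : Type*} [CommRing R] (u : Rˣ) (m : ℤ) :
    (1 - u : R) ∣ 1 - ↑(u ^ m) := by
  have dvd_natPow (n : ℕ) : (1 - u : R) ∣ 1 - u ^ n := by
    simpa using sub_dvd_pow_sub_pow (1 : R) u n
  obtain ⟨n, rfl | rfl⟩ := m.eq_nat_or_neg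
  · simpa using dvd_natPow n
  · have factor : (1 - ↑(u ^ (-n : ℤ)) : R) = (1 - u ^ n) * -↑(u ^ (-n : ℤ)) := by
      have inv_cancel : (u ^ n * ↑(u ^ (-n : ℤ)) : R) = 1 := by
        rw [zpow_neg, zpow_natCast, ← Units.val_pow_eq_pow_val, Units.mul_inv]
      linear_combination -inv_cancel
    exact factor ▸ (dvd_natPow n).mul_right _

theorem edvd_one_sub_exp_int_mul (γ w : ℂ) (m : ℤ) :
    EDvd (fun z => 1 - exp (γ * (z - w))) (fun z => 1 - exp (m * γ * (z - w))) := by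
  let u := (shiftedExp w).toHomUnits (Multiplicative.ofAdd γ)
  have zpow_eq : ((u ^ m : expPolySubalgebraˣ) : expPolySubalgebra) =
      shiftedExp w (Multiplicative.ofAdd (m * γ)) := by
    rw [← map_zpow, ← ofAdd_zsmul, zsmul_eq_mul, MonoidHom.coe_toHomUnits]
  exact edvd_of_dvd (zpow_eq ▸ one_sub_unit_dvd_one_sub_zpow u m)

/-- The binomial `1 - a·e^{αz}` of `𝓔`, the shape shared by the given functions and their common
divisor. The degenerate values `a = 0` and `α = 0` are allowed. -/
def expBinomial (a α : ℂ) : ℂ → ℂ :=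
  fun z => 1 - a * exp (α * z)

theorem expBinomial_eq_of_zero {a α w : ℂ} (hw : expBinomial a α w = 0) :
    expBinomial a α = fun z => 1 - exp (α * (z - w)) := by
  have coeff_mul : a * exp (α * w) = 1 := (sub_eq_zero.mp hw).symm
  funext z
  calc 1 - a * exp (α * z) = 1 - a * exp (α * w) * exp (α * (z - w)) := by
        rw [mul_assoc, ← exp_add]
        ring_nf
    _ = 1 - exp (α * (z - w)) := by rw [coeff_mul, one_mul]

theorem exists_int_eq_mul_of_expBinomial_zeros {a α z₀ z₁ : ℂ} (hne : z₀ ≠ z₁)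
    (hz₀ : expBinomial a α z₀ = 0) (hz₁ : expBinomial a α z₁ = 0) :
    ∃ m : ℤ, α = m * (2 * Real.pi * I / (z₁ - z₀)) := by
  rw [expBinomial_eq_of_zero hz₀, sub_eq_zero, eq_comm, exp_eq_one_iff] at hz₁
  obtain ⟨m, hm⟩ := hz₁
  exact ⟨m, by rw [← mul_div_assoc, eq_div_iff (sub_ne_zero.mpr hne.symm), hm]⟩

theorem expBinomial_edvd_of_common_zero {a c γ w : ℂ} {m : ℤ} (hc : expBinomial c γ w = 0)
    (ha : expBinomial a (m * γ) w = 0) : EDvd (expBinomial c γ) (expBinomial a (m * γ)) := by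
  rw [expBinomial_eq_of_zero hc, expBinomial_eq_of_zero ha]
  exact edvd_one_sub_exp_int_mul γ w m

theorem isSimple_expBinomial {c γ : ℂ} (hc : c ≠ 0) (hγ : γ ≠ 0) :
    IsSimple (expBinomial c γ) := by
  refine ⟨2, ![1, -c], ![0, γ], ⟨?coeff_ne_zero, ?exponents_injective, ?eq_sum⟩, ?finrank⟩
  case coeff_ne_zero => simp [Fin.forall_fin_two, hc]
  case exponents_injective => simp [Function.Injective, Fin.forall_fin_two, hγ, hγ.symm]
  case eq_sum => simp [expBinomial, Fin.sum_univ_two, sub_eq_add_neg]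
  case finrank =>
    rw [Matrix.range_cons_cons_empty, Submodule.span_insert_zero]
    exact finrank_span_singleton hγ

theorem infinite_zeros_expBinomial {c γ : ℂ} (hc : c ≠ 0) (hγ : γ ≠ 0) :
    {z | expBinomial c γ z = 0}.Infinite := by
  refine Set.infinite_of_injective_forall_mem
    (f := fun k : ℤ => (k * (2 * Real.pi * I) - log c) / γ) ?_ fun k => ?_
  · intro k l hkl
    simpa [hγ] using hkl
  · have exp_eq : exp (γ * ((k * (2 * Real.pi * I) - log c) / γ)) = c⁻¹ := by
      rw [mul_div_cancel₀ _ hγ, exp_sub, exp_int_mul_two_pi_mul_I, exp_log hc, one_div]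
    simp [expBinomial, exp_eq, hc]

theorem shapiro_two_binomials_general {ι : Type*} (a α : ι → ℂ)
    (hzeros : {z | ∀ i, expBinomial (a i) (α i) z = 0}.Nontrivial) :
    ∃ h : ℂ → ℂ, IsSimple h ∧ {z : ℂ | h z = 0}.Infinite ∧
      ∀ i, EDvd h (expBinomial (a i) (α i)) := by
  obtain ⟨z₀, hz₀, z₁, hz₁, hne⟩ := hzeros
  let γ := 2 * Real.pi * I / (z₁ - z₀)
  let c := exp (-(γ * z₀))
  have γ_ne_zero : γ ≠ 0 := div_ne_zero two_pi_I_ne_zero (sub_ne_zero.mpr hne.symm)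
  have c_ne_zero : c ≠ 0 := exp_ne_zero _
  have divisor_zero : expBinomial c γ z₀ = 0 := by simp [expBinomial, c, ← exp_add]
  refine ⟨expBinomial c γ, isSimple_expBinomial c_ne_zero γ_ne_zero,
    infinite_zeros_expBinomial c_ne_zero γ_ne_zero, fun i => ?_⟩
  obtain ⟨m, hm⟩ := exists_int_eq_mul_of_expBinomial_zeros hne (hz₀ i) (hz₁ i)
  rw [hm]
  exact expBinomial_edvd_of_common_zero divisor_zero (hm ▸ hz₀ i)

/-- If `1 - a·e^{αz}` and `1 - b·e^{βz}` have infinitely many common zeros, then they have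
a common simple divisor in `𝓔` with infinitely many zeros. -/
theorem shapiro_two_binomials (a b α β : ℂ)
    (ha : a ≠ 0) (hb : b ≠ 0) (hα : α ≠ 0) (hβ : β ≠ 0)
    (hinf : {z : ℂ | 1 - a * Complex.exp (α * z) = 0 ∧
      1 - b * Complex.exp (β * z) = 0}.Infinite) :
    ∃ h : ℂ → ℂ, IsSimple h ∧ {z : ℂ | h z = 0}.Infinite ∧
      EDvd h (fun z : ℂ => 1 - a * Complex.exp (α * z)) ∧
      EDvd h (fun z : ℂ => 1 - b * Complex.exp (β * z)) := by
  obtain ⟨h, h_simple, h_zeros, h_dvd⟩ := shapiro_two_binomials_general ![a, b] ![α, β]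
    (by simpa [expBinomial, Fin.forall_fin_two] using hinf.nontrivial)
  exact ⟨h, h_simple, h_zeros, h_dvd 0, h_dvd 1⟩
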